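/- arXiv:0801.2830 — 3 statements merged into one kernel-verified Lean document; each statement's English description precedes it below -/
import Mathlib

section
/- The kernel of ρ equals the ideal of ℂ[X_{j,a} : (j,a) ∈ I] generated by the l elements ∏_{j=1}^{n_a+1} X_{j,a} − q_a, a = 1, …, l (the quantum Stanley–Reisner relations of ℙ^{n_1} × ⋯ × ℙ^{n_l}); in particular ρ induces an isomorphism of ℂ-algebras ℂ[X_{j,a} : (j,a) ∈ I]/⟨∏_{j=1}^{n_a+1} X_{j,a} − q_a : a = 1, …, l⟩ ≅ ℂ[ℤ^N]. -/
/-- The primitive ray generators of the fan of `ℙ^{n₁} × ⋯ × ℙ^{n_l}`, indexed by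
`I = {(j,a) : 1 ≤ a ≤ l, 1 ≤ j ≤ n_a + 1}` (encoded as the sigma type
`Σ a : Fin l, Fin (n a + 1)`): in the `a`-th block, `v_{j,a}` is the `j`-th standard
basis vector for `j ≤ n_a`, and `v_{n_a+1,a} = −(e₁ + ⋯ + e_{n_a})`. -/
def rayGen {l : ℕ} (n : Fin l → ℕ) (p : Σ a : Fin l, Fin (n a + 1)) :
    ∀ a : Fin l, Fin (n a) → ℤ := fun b m =>
  if b = p.1 then
    (if (p.2 : ℕ) = n p.1 then -1 else if (m : ℕ) = (p.2 : ℕ) then 1 else 0)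
  else 0

/-!
The lattice `ℤ^N` is the abelian group freely generated by the rays `v_{j,a}` subject to
`∑ j, v_{j,a} = 0`: the first `n_a` rays of each block form a basis, and the block relation
determines the last one. Hence `R[ℤ^N]` has the universal property of `R[X]/J`, with `J` generated
by the relations `∏ j, X_{j,a} = q_a`, because these force every `X_{j,a}` to be invertible. The
quotient map `R[X] → R[X]/J` therefore factors through `ρ`, so `ker ρ ⊆ J`. For surjectivity, the
block relation expresses `-v_{j,a}` as a sum of rays, so the rays generate `ℤ^N` as a monoid.
-/

section BlockFamilies

variable {ι : Type*} {κ : ι → Type*} [∀ a, Fintype (κ a)]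

theorem neg_mem_addSubmonoidClosure_range_of_sum_eq_zero {G : Type*} [AddCommGroup G]
    {v : (Σ a, κ a) → G} (hv : ∀ a, ∑ j, v ⟨a, j⟩ = 0) (p : Σ a, κ a) :
    -v p ∈ AddSubmonoid.closure (Set.range v) := by
  classical
  obtain ⟨a, j⟩ := p
  have hsum : v ⟨a, j⟩ + ∑ i ∈ Finset.univ.erase j, v ⟨a, i⟩ = 0 := by
    rw [Finset.add_sum_erase _ (fun i => v ⟨a, i⟩) (Finset.mem_univ j), hv]
  rw [neg_eq_of_add_eq_zero_right hsum]
  exact sum_mem fun i _ => AddSubmonoid.subset_closure ⟨_, rfl⟩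

theorem addSubgroupClosure_toAddSubmonoid_of_sum_eq_zero {G : Type*} [AddCommGroup G]
    {v : (Σ a, κ a) → G} (hv : ∀ a, ∑ j, v ⟨a, j⟩ = 0) :
    (AddSubgroup.closure (Set.range v)).toAddSubmonoid = AddSubmonoid.closure (Set.range v) := by
  rw [AddSubgroup.closure_toAddSubmonoid, AddSubmonoid.closure_union, sup_eq_left,
    AddSubmonoid.closure_le]
  rintro g ⟨p, hp⟩
  rw [← neg_neg g, ← hp]
  exact neg_mem_addSubmonoidClosure_range_of_sum_eq_zero hv p

variable {R : Type*} [CommRing R]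

variable (κ) in
/-- The ideal generated by the quantum Stanley–Reisner relations `∏ j, X_{j,a} = q a` of a product
of projective spaces. The homogeneous coordinates of the `a`-th factor are indexed by `κ a`, so
that factor has dimension `#(κ a) - 1`. -/
noncomputable def quantumStanleyReisnerIdeal (q : ι → R) : Ideal (MvPolynomial (Σ a, κ a) R) :=
  Ideal.span (Set.range fun a => (∏ j, MvPolynomial.X ⟨a, j⟩) - MvPolynomial.C (q a))

theorem prod_mk_X_quantumStanleyReisnerIdeal (q : ι → R) (a : ι) :
    ∏ j, Ideal.Quotient.mkₐ R (quantumStanleyReisnerIdeal κ q) (MvPolynomial.X ⟨a, j⟩) =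
      algebraMap R _ (q a) := by
  rw [← map_prod, ← (Ideal.Quotient.mkₐ R _).commutes]
  exact Ideal.Quotient.eq.2 (Ideal.subset_span ⟨a, rfl⟩)

theorem quantumStanleyReisnerIdeal_le_ker {M : Type*} [AddCommMonoid M]
    {v : (Σ a, κ a) → M} (hv : ∀ a, ∑ j, v ⟨a, j⟩ = 0) {c : (Σ a, κ a) → R}
    {ρ : MvPolynomial (Σ a, κ a) R →ₐ[R] AddMonoidAlgebra R M}
    (hρ : ∀ p, ρ (MvPolynomial.X p) = AddMonoidAlgebra.single (v p) (c p)) :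
    quantumStanleyReisnerIdeal κ (fun a => ∏ j, c ⟨a, j⟩) ≤ RingHom.ker ρ := by
  refine Ideal.span_le.2 ?_
  rintro _ ⟨a, rfl⟩
  rw [SetLike.mem_coe, RingHom.mem_ker, map_sub, sub_eq_zero, map_prod,
    ← MvPolynomial.algebraMap_eq, ρ.commutes]
  simp only [hρ, AddMonoidAlgebra.prod_single, hv]
  rfl

end BlockFamilies

theorem algHom_surjective_of_addSubmonoidClosure_eq_top {R M A : Type*} [CommSemiring R]
    [AddMonoid M] [Semiring A] [Algebra R A] {ρ : A →ₐ[R] AddMonoidAlgebra R M} {s : Set M}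
    (hs : AddSubmonoid.closure s = ⊤)
    (hρ : ∀ m ∈ s, AddMonoidAlgebra.single m 1 ∈ ρ.range) :
    Function.Surjective ρ := by
  have single_mem_range (m : M) : AddMonoidAlgebra.single m 1 ∈ ρ.range := by
    have hm : m ∈ AddSubmonoid.closure s := hs ▸ AddSubmonoid.mem_top m
    induction hm using AddSubmonoid.closure_induction with
    | mem m hm => exact hρ m hm
    | zero => exact one_mem _
    | add m m' _ _ hm hm' =>
      simpa only [AddMonoidAlgebra.single_mul_single, mul_one] using mul_mem hm hm'
  intro f
  rw [← AlgHom.mem_range]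
  induction f using AddMonoidAlgebra.induction_on with
  | of m => exact single_mem_range m
  | add f g hf hg => exact add_mem hf hg
  | smul r f hf => exact ρ.range.smul_mem hf r

theorem eq_of_castSucc_eq_of_sum_eq {G : Type*} [AddCancelCommMonoid G] {k : ℕ}
    {u w : Fin (k + 1) → G} (hcast : ∀ i : Fin k, u i.castSucc = w i.castSucc)
    (hsum : ∑ j, u j = ∑ j, w j) : u = w := by
  have hlast : u (Fin.last k) = w (Fin.last k) := by
    simpa only [Fin.sum_univ_castSucc, hcast, add_right_inj] using hsum
  exact funext (Fin.lastCases hlast hcast)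

section RayGenerators

variable {l : ℕ} (n : Fin l → ℕ)

theorem rayGen_castSucc (a : Fin l) (i : Fin (n a)) :
    rayGen n ⟨a, i.castSucc⟩ = Pi.basis (fun a => Pi.basisFun ℤ (Fin (n a))) ⟨a, i⟩ := by
  rw [Pi.basis_apply, Pi.basisFun_apply]
  funext b m
  obtain rfl | hb := eq_or_ne b a
  · simp [rayGen, i.isLt.ne, Pi.single_apply, Fin.ext_iff]
  · simp [rayGen, hb]

theorem rayGen_last (a : Fin l) : rayGen n ⟨a, Fin.last (n a)⟩ = Pi.single a (-1) := by
  funext b m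
  obtain rfl | hb := eq_or_ne b a
  · simp [rayGen]
  · simp [rayGen, hb]

theorem sum_rayGen (a : Fin l) : ∑ j, rayGen n ⟨a, j⟩ = 0 := by
  have hcast : ∑ i : Fin (n a), rayGen n ⟨a, i.castSucc⟩ = Pi.single a 1 := by
    simp only [rayGen_castSucc, Pi.basis_apply, Pi.basisFun_apply]
    rw [← Finset.univ_sum_single (1 : Fin (n a) → ℤ)]
    exact (map_sum (AddMonoidHom.single (fun b => Fin (n b) → ℤ) a) _ _).symm
  rw [Fin.sum_univ_castSucc, hcast, rayGen_last, ← Pi.single_add, add_neg_cancel, Pi.single_zero]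

theorem addSubgroupClosure_range_rayGen : AddSubgroup.closure (Set.range (rayGen n)) = ⊤ := by
  let b := Pi.basis fun a => Pi.basisFun ℤ (Fin (n a))
  have hb : Set.range b ⊆ Set.range (rayGen n) := by
    rintro _ ⟨⟨a, i⟩, rfl⟩
    exact ⟨_, rayGen_castSucc n a i⟩
  refine top_unique (le_trans ?_ (AddSubgroup.closure_mono hb))
  rw [← Submodule.span_int_eq_addSubgroupClosure, b.span_eq, Submodule.top_toAddSubgroup]

theorem addSubmonoidClosure_range_rayGen : AddSubmonoid.closure (Set.range (rayGen n)) = ⊤ := by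
  rw [← addSubgroupClosure_toAddSubmonoid_of_sum_eq_zero (sum_rayGen n),
    addSubgroupClosure_range_rayGen, AddSubgroup.top_toAddSubmonoid]

variable {n}

theorem exists_addMonoidHom_rayGen_eq {G : Type*} [AddCommGroup G]
    {u : (Σ a, Fin (n a + 1)) → G} (hu : ∀ a, ∑ j, u ⟨a, j⟩ = 0) :
    ∃ ψ : (∀ a, Fin (n a) → ℤ) →+ G, ∀ p, ψ (rayGen n p) = u p := by
  let b := Pi.basis fun a => Pi.basisFun ℤ (Fin (n a))
  let ψ := b.constr ℤ fun p => u ⟨p.1, p.2.castSucc⟩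
  refine ⟨ψ.toAddMonoidHom, fun ⟨a, j⟩ => ?_⟩
  have hcast (i : Fin (n a)) : ψ (rayGen n ⟨a, i.castSucc⟩) = u ⟨a, i.castSucc⟩ := by
    rw [rayGen_castSucc, b.constr_basis]
  have hsum : ∑ j, ψ (rayGen n ⟨a, j⟩) = ∑ j, u ⟨a, j⟩ := by
    rw [← map_sum, sum_rayGen, map_zero, hu]
  exact congrFun (eq_of_castSucc_eq_of_sum_eq hcast hsum) j

variable {R : Type*} [CommRing R] {c : (Σ a, Fin (n a + 1)) → Rˣ}

theorem exists_algHom_single_rayGen_eq {A : Type*} [CommRing A] [Algebra R A]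
    {x : (Σ a, Fin (n a + 1)) → A}
    (hx : ∀ a, ∏ j, x ⟨a, j⟩ = algebraMap R A (∏ j, (c ⟨a, j⟩ : R))) :
    ∃ σ : AddMonoidAlgebra R (∀ a, Fin (n a) → ℤ) →ₐ[R] A,
      ∀ p, σ (AddMonoidAlgebra.single (rayGen n p) (c p : R)) = x p := by
  have hunit (p) : IsUnit (x p) := by
    have hprod : IsUnit (∏ j, x ⟨p.1, j⟩) := by
      rw [hx, ← Units.coe_prod]
      exact (Units.isUnit _).map _
    exact IsUnit.prod_univ_iff.1 hprod p.2
  lift x to (Σ a, Fin (n a + 1)) → Aˣ using hunit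
  let d (p) : Aˣ := Units.map (algebraMap R A) (c p)
  have hdiv (a) : ∏ j, x ⟨a, j⟩ / d ⟨a, j⟩ = 1 := by
    rw [Finset.prod_div_distrib, div_eq_one]
    ext
    simpa [d] using hx a
  obtain ⟨ψ, hψ⟩ := exists_addMonoidHom_rayGen_eq (G := Additive Aˣ)
    (u := fun p => Additive.ofMul (x p / d p)) hdiv
  refine ⟨AddMonoidAlgebra.lift R A _ ((Units.coeHom A).comp ψ.toMultiplicativeLeft), fun p => ?_⟩
  have hmul : (d p : A) * ↑(x p / d p) = x p := by rw [← Units.val_mul, mul_div_cancel]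
  simpa [AddMonoidAlgebra.lift_single, Algebra.smul_def, hψ, d] using hmul

variable {ρ : MvPolynomial (Σ a, Fin (n a + 1)) R →ₐ[R]
    AddMonoidAlgebra R (∀ a, Fin (n a) → ℤ)}

theorem ker_le_quantumStanleyReisnerIdeal
    (hρ : ∀ p, ρ (MvPolynomial.X p) = AddMonoidAlgebra.single (rayGen n p) (c p : R)) :
    RingHom.ker ρ ≤
      quantumStanleyReisnerIdeal (fun a => Fin (n a + 1)) (fun a => ∏ j, (c ⟨a, j⟩ : R)) := by
  set J := quantumStanleyReisnerIdeal (fun a => Fin (n a + 1)) (fun a => ∏ j, (c ⟨a, j⟩ : R))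
  obtain ⟨σ, hσ⟩ := exists_algHom_single_rayGen_eq
    (x := fun p => Ideal.Quotient.mkₐ R J (MvPolynomial.X p))
    (prod_mk_X_quantumStanleyReisnerIdeal _)
  have hcomp : σ.comp ρ = Ideal.Quotient.mkₐ R J :=
    MvPolynomial.algHom_ext fun p => by rw [AlgHom.comp_apply, hρ, hσ]
  intro f hf
  rw [← Ideal.Quotient.eq_zero_iff_mem, ← Ideal.Quotient.mkₐ_eq_mk R, ← hcomp,
    AlgHom.comp_apply, RingHom.mem_ker.1 hf, map_zero]

theorem surjective_of_map_X_eq_single_rayGen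
    (hρ : ∀ p, ρ (MvPolynomial.X p) = AddMonoidAlgebra.single (rayGen n p) (c p : R)) :
    Function.Surjective ρ := by
  refine algHom_surjective_of_addSubmonoidClosure_eq_top (addSubmonoidClosure_range_rayGen n) ?_
  rintro _ ⟨p, rfl⟩
  refine ⟨(↑(c p)⁻¹ : R) • MvPolynomial.X p, ?_⟩
  simp [hρ]

end RayGenerators

theorem stmt3_general {R : Type*} [CommRing R] {l : ℕ} {n : Fin l → ℕ}
    {c : (Σ a, Fin (n a + 1)) → Rˣ}
    {ρ : MvPolynomial (Σ a, Fin (n a + 1)) R →ₐ[R] AddMonoidAlgebra R (∀ a, Fin (n a) → ℤ)}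
    (hρ : ∀ p, ρ (MvPolynomial.X p) = AddMonoidAlgebra.single (rayGen n p) (c p : R)) :
    RingHom.ker ρ =
        quantumStanleyReisnerIdeal (fun a => Fin (n a + 1)) (fun a => ∏ j, (c ⟨a, j⟩ : R)) ∧
      Function.Surjective ρ := by
  have hle := quantumStanleyReisnerIdeal_le_ker (c := fun p => (c p : R)) (sum_rayGen n) hρ
  exact ⟨(ker_le_quantumStanleyReisnerIdeal hρ).antisymm hle,
    surjective_of_map_X_eq_single_rayGen hρ⟩

/-- Let `ρ : ℂ[X_{j,a}] → ℂ[ℤ^N]` be the `ℂ`-algebra homomorphism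
sending `X_{j,a}` to `exp(λ_{j,a}) · single (v_{j,a})`.  Then the kernel of `ρ` equals
the ideal generated by the `l` quantum Stanley–Reisner relations
`∏_{j=1}^{n_a+1} X_{j,a} − q_a`, where `q_a = exp(Σ_j λ_{j,a})`; moreover `ρ` is
surjective, so it induces an isomorphism of `ℂ`-algebras
`ℂ[X_{j,a}]/⟨∏_j X_{j,a} − q_a : a⟩ ≅ ℂ[ℤ^N]`. -/
theorem stmt3 (l : ℕ) (hl : 1 ≤ l) (n : Fin l → ℕ) (hn : ∀ a, 1 ≤ n a)
    (lam : (Σ a : Fin l, Fin (n a + 1)) → ℝ)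
    (ρ : MvPolynomial (Σ a : Fin l, Fin (n a + 1)) ℂ →ₐ[ℂ]
      AddMonoidAlgebra ℂ (∀ a : Fin l, Fin (n a) → ℤ))
    (hρ : ∀ p, ρ (MvPolynomial.X p)
      = AddMonoidAlgebra.single (rayGen n p) ((Real.exp (lam p) : ℝ) : ℂ)) :
    RingHom.ker ρ.toRingHom
      = Ideal.span (Set.range fun a : Fin l =>
          (∏ j : Fin (n a + 1), MvPolynomial.X (⟨a, j⟩ : Σ a : Fin l, Fin (n a + 1)))
            - MvPolynomial.C ((Real.exp (∑ j : Fin (n a + 1), lam ⟨a, j⟩) : ℝ) : ℂ)) ∧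
    Function.Surjective ρ := by
  simpa [quantumStanleyReisnerIdeal, Real.exp_sum, AlgHom.ker_coe] using
    stmt3_general (c := fun p => Units.mk0 ((Real.exp (lam p) : ℝ) : ℂ) (by simp)) hρ
end

section
/- For all x, y ∈ ℝ^n, the family over w ∈ ℤ^n with terms c_w · z(x,y)^w has sum exp(W(z(x,y))) = ∏_{i=1}^d exp(e^{λ_i} z(x,y)^{v_i}); that is, the fiberwise Fourier series Σ_{w ∈ ℤ^n} Φ(x, w) e^{−√−1⟨y,w⟩} of the disc-counting function Φ(x, w) = c_w e^{−⟨x,w⟩} converges unconditionally to the exponential of the superpotential: the SYZ mirror transformation of Φ is e^W. -/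
/-!
The exponential of a sum is the sum of its multivariate Taylor series, which converges absolutely
and may therefore be summed fibrewise along `k ↦ ∑ i, k i • v i`. Since `w ↦ z ^ w` is a character,
the term of index `k` is a scalar times `z ^ (∑ i, k i • v i)`, so on the fibre over `w` the
monomial `z ^ w` factors out and leaves the coefficient `c_w`.
-/

open Multiplicative (ofAdd)
open scoped Nat

section ProductsOfSeries

variable {R : Type*} [NormedCommRing R] [CompleteSpace R]

theorem summable_norm_and_hasSum_prod_fin {d : ℕ} {κ : Fin d → Type*} {f : ∀ i, κ i → R}
    {s : Fin d → R} (hf : ∀ i, Summable fun m ↦ ‖f i m‖) (hs : ∀ i, HasSum (f i) (s i)) :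
    (Summable fun k : ∀ i, κ i ↦ ‖∏ i, f i (k i)‖) ∧
      HasSum (fun k : ∀ i, κ i ↦ ∏ i, f i (k i)) (∏ i, s i) := by
  induction d with
  | zero => exact ⟨(hasSum_fintype _).summable, by simp⟩
  | succ d ih =>
    obtain ⟨tail_norm, tail_sum⟩ := ih (fun i ↦ hf i.succ) (fun i ↦ hs i.succ)
    rw [← (Fin.consEquiv κ).summable_iff, ← (Fin.consEquiv κ).hasSum_iff]
    simp only [Function.comp_def, Fin.prod_univ_succ, Fin.consEquiv_apply, Fin.cons_zero,
      Fin.cons_succ]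
    have prod_norm := (hf 0).mul_norm tail_norm
    have prod_sum := (hs 0).mul tail_sum prod_norm.of_norm
    exact ⟨prod_norm, prod_sum⟩

theorem hasSum_prod_pi {ι : Type*} [Fintype ι] {κ : ι → Type*}
    {f : ∀ i, κ i → R} {s : ι → R} (hf : ∀ i, Summable fun m ↦ ‖f i m‖)
    (hs : ∀ i, HasSum (f i) (s i)) :
    HasSum (fun k : ∀ i, κ i ↦ ∏ i, f i (k i)) (∏ i, s i) := by
  let e := (Fintype.equivFin ι).symm
  have reindex (k : ∀ j, κ (e j)) : ∏ i, f i (e.piCongrLeft κ k i) = ∏ j, f (e j) (k j) := by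
    simp only [← e.prod_comp, Equiv.piCongrLeft_apply_apply]
  rw [← (e.piCongrLeft κ).hasSum_iff, ← e.prod_comp]
  simpa only [Function.comp_def, reindex] using
    (summable_norm_and_hasSum_prod_fin (fun j ↦ hf (e j)) (fun j ↦ hs (e j))).2

end ProductsOfSeries

section ExponentialSeries

variable (𝕂 : Type*) {ι 𝔸 : Type*} [Fintype ι] [RCLike 𝕂]
  [NormedCommRing 𝔸] [NormedAlgebra 𝕂 𝔸] [CompleteSpace 𝔸]

theorem hasSum_prod_expSeries (x : ι → 𝔸) :
    HasSum (fun k : ι → ℕ ↦ ∏ i, ((k i)! : 𝕂)⁻¹ • x i ^ k i) (NormedSpace.exp (∑ i, x i)) := by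
  have exp_sum : NormedSpace.exp (∑ i, x i) = ∏ i, NormedSpace.exp (x i) :=
    letI : NormedAlgebra ℚ 𝔸 := NormedAlgebra.restrictScalars ℚ 𝕂 𝔸
    NormedSpace.exp_sum Finset.univ x
  rw [exp_sum]
  exact hasSum_prod_pi (f := fun i m ↦ (m ! : 𝕂)⁻¹ • x i ^ m)
    (fun i ↦ NormedSpace.norm_expSeries_summable' (x i))
    (fun i ↦ NormedSpace.exp_series_hasSum_exp' (x i))

variable {𝕂}

theorem summable_prod_pow_div_factorial (a : ι → 𝕂) :
    Summable fun k : ι → ℕ ↦ ∏ i, a i ^ k i / (k i)! := by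
  simpa only [smul_eq_mul, inv_mul_eq_div] using (hasSum_prod_expSeries 𝕂 a).summable

end ExponentialSeries

theorem hasSum_tsum_fiber_smul {β γ 𝕂 E : Type*} [NormedField 𝕂] [CompleteSpace 𝕂]
    [NormedAddCommGroup E] [NormedSpace 𝕂 E] [CompleteSpace E] {c : β → 𝕂} {g : β → γ}
    {e : γ → E} {s : E} (hc : Summable c) (hs : HasSum (fun b ↦ c b • e (g b)) s) :
    HasSum (fun y ↦ (∑' b : {b // g b = y}, c b) • e y) s := by
  convert hs.tsum_fiberwise g with y
  calc (∑' b : {b // g b = y}, c b) • e y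
      = ∑' b : {b // g b = y}, c b • e y :=
        ((hc.subtype {b | g b = y}).tsum_smul_const (e y)).symm
    _ = ∑' b : g ⁻¹' {y}, c b • e (g b) := tsum_congr fun b ↦ by rw [b.2]

section ExponentialCoefficients

variable {ι M 𝕂 𝔸 : Type*} [Fintype ι] [AddCommMonoid M] [RCLike 𝕂]
  [NormedCommRing 𝔸] [NormedAlgebra 𝕂 𝔸]

/-- The coefficient of `X ^ w` in the formal expansion of `exp (∑ i, a i * X ^ v i)`, for exponents
in an additive monoid. With `a i = exp (λ i)` this is the number `c_w` counting discs. The family is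
always summable (`summable_prod_pow_div_factorial`), so the `tsum` takes no junk value. -/
noncomputable def expCoeff (a : ι → 𝕂) (v : ι → M) (w : M) : 𝕂 :=
  ∑' k : {k : ι → ℕ // ∑ i, k i • v i = w}, ∏ i, a i ^ k.1 i / (k.1 i)!

theorem expCoeff_exp (lam : ι → ℝ) (v : ι → M) (w : M) :
    expCoeff (fun i ↦ Real.exp (lam i)) v w =
      ∑' k : {k : ι → ℕ // ∑ i, k i • v i = w},
        Real.exp (∑ i, (k.1 i : ℝ) * lam i) / ∏ i, ((k.1 i)! : ℝ) := by
  simp only [expCoeff, Finset.prod_div_distrib, Real.exp_sum, Real.exp_nat_mul]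

theorem prod_expSeries_smul_character (a : ι → 𝕂) (v : ι → M) (χ : Multiplicative M →* 𝔸)
    (k : ι → ℕ) :
    ∏ i, ((k i)! : 𝕂)⁻¹ • (a i • χ (ofAdd (v i))) ^ k i =
      (∏ i, a i ^ k i / (k i)!) • χ (ofAdd (∑ i, k i • v i)) := by
  simp only [ofAdd_sum, ofAdd_nsmul, map_prod, map_pow, smul_pow, smul_smul, Finset.prod_smul,
    inv_mul_eq_div]

theorem stmt6_general [CompleteSpace 𝔸] (a : ι → 𝕂) (v : ι → M) (χ : Multiplicative M →* 𝔸) :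
    HasSum (fun w ↦ expCoeff a v w • χ (ofAdd w))
      (NormedSpace.exp (∑ i, a i • χ (ofAdd (v i)))) := by
  have taylor := hasSum_prod_expSeries 𝕂 fun i ↦ a i • χ (ofAdd (v i))
  simp only [prod_expSeries_smul_character] at taylor
  simpa only [expCoeff] using
    hasSum_tsum_fiber_smul (g := fun k : ι → ℕ ↦ ∑ i, k i • v i) (e := fun w ↦ χ (ofAdd w))
      (summable_prod_pow_div_factorial a) taylor

end ExponentialCoefficients

/-- The character `w ↦ z ^ w = ∏ j, z j ^ w j` of the lattice `κ → ℤ` attached to a point `z` of the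
algebraic torus; the lattice is written multiplicatively to make this a monoid homomorphism. -/
def laurentMonomial {κ G₀ : Type*} [Fintype κ] [CommGroupWithZero G₀] (z : κ → G₀)
    (hz : ∀ j, z j ≠ 0) : Multiplicative (κ → ℤ) →* G₀ where
  toFun w := ∏ j, z j ^ w.toAdd j
  map_one' := by simp
  map_mul' w w' := by simp [zpow_add₀ (hz _), Finset.prod_mul_distrib]

@[simp]
theorem laurentMonomial_ofAdd {κ G₀ : Type*} [Fintype κ] [CommGroupWithZero G₀] (z : κ → G₀)
    (hz : ∀ j, z j ≠ 0) (w : κ → ℤ) : laurentMonomial z hz (ofAdd w) = ∏ j, z j ^ w j :=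
  rfl

/-- With `z_j = exp(−x_j − √−1 y_j)` and
`c_w = Σ_{k ∈ ℕ^d : Σᵢ kᵢ vᵢ = w} exp(λ₁k₁ + ⋯ + λ_d k_d)/(k₁! ⋯ k_d!)`:
for all `x, y ∈ ℝⁿ`, the family over `w ∈ ℤⁿ` with terms `c_w · z^w` has sum
`exp(W(z)) = ∏ᵢ exp(e^{λᵢ} z^{vᵢ})`, where `W(z) = Σᵢ e^{λᵢ} z^{vᵢ}` is the
superpotential; that is, the fiberwise Fourier series of the disc-counting function
`Φ(x, w) = c_w e^{−⟨x,w⟩}` converges unconditionally to the exponential of the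
superpotential: the SYZ mirror transformation of `Φ` is `e^W`. -/
theorem stmt6 (n d : ℕ) (hn : 1 ≤ n) (hd : 1 ≤ d)
    (v : Fin d → Fin n → ℤ) (lam : Fin d → ℝ) (x y : Fin n → ℝ) :
    HasSum (fun w : Fin n → ℤ =>
      (((∑' k : {k : Fin d → ℕ // ∑ i, k i • v i = w},
          Real.exp (∑ i, (k.1 i : ℝ) * lam i) /
            ∏ i, (Nat.factorial (k.1 i) : ℝ)) : ℝ) : ℂ) *
        ∏ j, (Complex.exp (-(x j : ℂ) - Complex.I * (y j : ℂ))) ^ (w j))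
      (Complex.exp (∑ i, ((Real.exp (lam i) : ℝ) : ℂ) *
        ∏ j, (Complex.exp (-(x j : ℂ) - Complex.I * (y j : ℂ))) ^ (v i j))) := by
  simpa only [expCoeff_exp, laurentMonomial_ofAdd, Complex.real_smul, ← Complex.exp_eq_exp_ℂ] using
    stmt6_general (fun i ↦ Real.exp (lam i)) v (laurentMonomial _ fun j ↦ Complex.exp_ne_zero _)
end

section
/- For all x ∈ ℝ^n and all w ∈ ℤ^n, ∫_{[0,2π]^n} exp(Σ_{i=1}^d e^{λ_i} z(x,y)^{v_i}) · exp(√−1 Σ_{j=1}^n y_j w^j) dy = (2π)^n · c_w · exp(−⟨x, w⟩), the integral being with respect to Lebesgue measure on the cube [0,2π]^n; that is, the w-th fiberwise Fourier coefficient of e^W is the disc-counting function Φ(x, w) = c_w e^{−⟨x,w⟩}, so the inverse SYZ mirror transformation of e^W is Φ. -/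
open MeasureTheory

/-!
Expand `exp (∑ i, aᵢ)` as the absolutely convergent sum over `k : ι → ℕ` of `∏ i, aᵢ ^ kᵢ / kᵢ!`.
At `aᵢ = e^{λᵢ} z^{vᵢ}` the `k`-th term is a constant times the monomial with exponent `∑ i, kᵢ vᵢ`,
so its product with `e^{√-1 ⟨y, w⟩}` is a constant times the character of the torus with exponent
`w - ∑ i, kᵢ vᵢ`. Characters have modulus one, so the series may be integrated termwise, and
orthogonality of characters keeps exactly the terms with `∑ i, kᵢ vᵢ = w`. On these the dependence
on `x` is the common factor `e^{-⟨x, w⟩}`.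
-/

section PiProd

variable {ι R : Type*} {κ : ι → Type*} [hι : Fintype ι] [NormedCommRing R] {f : ∀ i, κ i → R}

theorem summable_norm_pi_prod (hf : ∀ i, Summable fun k => ‖f i k‖) :
    Summable fun k : ∀ i, κ i => ‖∏ i, f i (k i)‖ := by
  refine Fintype.induction_empty_option ?of_equiv ?empty ?option ι (h_fintype := hι) κ f hf
  case of_equiv =>
    intro α β _ e ih κ f hf
    let := Fintype.ofEquiv β e.symm
    rw [← (Equiv.piCongrLeft κ e).summable_iff]
    refine (ih _ _ fun i => hf (e i)).congr fun k => ?_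
    simp [← e.prod_comp, Equiv.piCongrLeft_apply_apply]
  case empty => exact fun _ _ _ => .of_finite
  case option =>
    intro α _ ih κ f hf
    rw [← Equiv.piOptionEquivProd.symm.summable_iff]
    refine ((hf none).mul_norm (ih _ _ fun i => hf (some i))).congr fun k => ?_
    simp [Fintype.prod_option, Equiv.piOptionEquivProd]

theorem hasSum_pi_prod [CompleteSpace R] {a : ι → R} (hf : ∀ i, Summable fun k => ‖f i k‖)
    (ha : ∀ i, HasSum (f i) (a i)) :
    HasSum (fun k : ∀ i, κ i => ∏ i, f i (k i)) (∏ i, a i) := by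
  refine Fintype.induction_empty_option ?of_equiv ?empty ?option ι (h_fintype := hι) κ f a hf ha
  case of_equiv =>
    intro α β _ e ih κ f a hf ha
    let := Fintype.ofEquiv β e.symm
    rw [← (Equiv.piCongrLeft κ e).hasSum_iff, ← e.prod_comp]
    refine (ih _ _ _ (fun i => hf (e i)) fun i => ha (e i)).congr_fun fun k => ?_
    simp [← e.prod_comp, Equiv.piCongrLeft_apply_apply]
  case empty => simp
  case option =>
    intro α _ ih κ f a hf ha
    have summable_mul := summable_mul_of_summable_norm (hf none)
      (summable_norm_pi_prod fun i => hf (some i))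
    rw [← Equiv.piOptionEquivProd.symm.hasSum_iff, Fintype.prod_option]
    refine ((ha none).mul (ih _ _ _ (fun i => hf (some i)) fun i => ha (some i))
      summable_mul).congr_fun fun k => ?_
    simp [Fintype.prod_option, Equiv.piOptionEquivProd]

end PiProd

section MultiExp

variable {ι : Type*} [Fintype ι]

theorem summable_norm_prod_pow_div_factorial (a : ι → ℂ) :
    Summable fun k : ι → ℕ => ‖∏ i, a i ^ k i / (k i).factorial‖ :=
  summable_norm_pi_prod (κ := fun _ => ℕ) (f := fun i k => a i ^ k / (k.factorial : ℂ))
    fun i => NormedSpace.norm_expSeries_div_summable (a i)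

theorem hasSum_prod_pow_div_factorial (a : ι → ℂ) :
    HasSum (fun k : ι → ℕ => ∏ i, a i ^ k i / (k i).factorial) (Complex.exp (∑ i, a i)) := by
  rw [Complex.exp_sum, Complex.exp_eq_exp_ℂ]
  exact hasSum_pi_prod (κ := fun _ => ℕ) (f := fun i k => a i ^ k / (k.factorial : ℂ))
    (fun i => NormedSpace.norm_expSeries_div_summable (a i))
    fun i => NormedSpace.expSeries_div_hasSum_exp (a i)

end MultiExp

section ExpMonomial

variable {σ : Type*} [Fintype σ]

/-- The Laurent monomial `z ^ m = ∏ j, z j ^ m j` in logarithmic coordinates `z j = exp (u j)`, as a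
character of the exponent `m`. At `u = √-1 y` with `y` real it is the `m`-th Fourier mode
`exp (√-1 ⟨y, m⟩)` of the torus. -/
noncomputable def expMonomial (u : σ → ℂ) : AddChar (σ → ℤ) ℂ where
  toFun m := Complex.exp (∑ j, u j * m j)
  map_zero_eq_one' := by simp
  map_add_eq_mul' m m' := by simp [mul_add, Finset.sum_add_distrib, Complex.exp_add]

theorem expMonomial_apply (u : σ → ℂ) (m : σ → ℤ) :
    expMonomial u m = Complex.exp (∑ j, u j * m j) := rfl

theorem expMonomial_eq_prod_zpow (u : σ → ℂ) (m : σ → ℤ) :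
    expMonomial u m = ∏ j, Complex.exp (u j) ^ m j := by
  simp [expMonomial_apply, Complex.exp_sum, ← Complex.exp_int_mul, mul_comm]

theorem expMonomial_sub_eq_mul_neg (u u' : σ → ℂ) (m : σ → ℤ) :
    expMonomial (u - u') m = expMonomial u m * expMonomial u' (-m) := by
  simp [expMonomial_apply, ← Complex.exp_add, sub_mul, ← sub_eq_add_neg]

theorem expMonomial_sum_nsmul {ι : Type*} [Fintype ι] (u : σ → ℂ) (k : ι → ℕ) (v : ι → σ → ℤ) :
    expMonomial u (∑ i, k i • v i) = ∏ i, expMonomial u (v i) ^ k i := by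
  simp_rw [← AddChar.map_nsmul_eq_pow]
  simpa only [← ofAdd_sum, AddChar.toMonoidHom_apply, toAdd_ofAdd] using
    map_prod (expMonomial u).toMonoidHom (fun i => Multiplicative.ofAdd (k i • v i)) Finset.univ

theorem norm_expMonomial_I_mul (y : σ → ℝ) (m : σ → ℤ) :
    ‖expMonomial (fun j => Complex.I * y j) m‖ = 1 := by
  simp [expMonomial_apply, Complex.norm_exp]

theorem continuous_expMonomial_I_mul (m : σ → ℤ) :
    Continuous fun y : σ → ℝ => expMonomial (fun j => Complex.I * y j) m := by
  simp only [expMonomial_apply]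
  fun_prop

end ExpMonomial

section TorusIntegral

variable {σ : Type*} [Fintype σ]

theorem integral_Icc_exp_I_mul_intCast (m : ℤ) :
    ∫ t in Set.Icc (0 : ℝ) (2 * Real.pi), Complex.exp (Complex.I * t * m) =
      if m = 0 then 2 * (Real.pi : ℂ) else 0 := by
  rw [integral_Icc_eq_integral_Ioc, ← intervalIntegral.integral_of_le Real.two_pi_pos.le]
  split_ifs with hm
  · simp [hm]
  · have hIm : Complex.I * m ≠ 0 := mul_ne_zero Complex.I_ne_zero (Int.cast_ne_zero.mpr hm)
    have periodic : Complex.exp (Complex.I * m * (2 * Real.pi : ℝ)) = 1 :=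
      Complex.exp_eq_one_iff.mpr ⟨m, by push_cast; ring⟩
    simp_rw [mul_right_comm Complex.I _ (m : ℂ)]
    rw [integral_exp_mul_complex hIm, periodic]
    simp

theorem integral_Icc_expMonomial_I_mul (m : σ → ℤ) :
    ∫ y in Set.Icc (0 : σ → ℝ) (fun _ => 2 * Real.pi), expMonomial (fun j => Complex.I * y j) m =
      if m = 0 then (2 * Real.pi : ℂ) ^ Fintype.card σ else 0 := by
  have cube_eq_pi : Set.Icc (0 : σ → ℝ) (fun _ => 2 * Real.pi) =
      Set.univ.pi fun _ => Set.Icc 0 (2 * Real.pi) :=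
    (Set.pi_univ_Icc _ _).symm
  simp_rw [expMonomial_apply, Complex.exp_sum]
  rw [cube_eq_pi, volume_pi, Measure.restrict_pi_pi,
    integral_fintype_prod_eq_prod fun j (t : ℝ) => Complex.exp (Complex.I * t * m j)]
  simp_rw [integral_Icc_exp_I_mul_intCast]
  split_ifs with hm
  · simp [hm]
  · obtain ⟨j, hj⟩ := Function.ne_iff.mp hm
    exact Finset.prod_eq_zero (Finset.mem_univ j) (if_neg hj)

theorem hasSum_integral_Icc_of_hasSum_expMonomial {K : Type*} [Countable K] {c : K → ℂ}
    (hc : Summable fun k => ‖c k‖) (m : K → σ → ℤ) {F : (σ → ℝ) → ℂ}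
    (hF : ∀ y, HasSum (fun k => c k * expMonomial (fun j => Complex.I * y j) (m k)) (F y)) :
    HasSum (fun k : {k // m k = 0} => (2 * Real.pi : ℂ) ^ Fintype.card σ * c k)
      (∫ y in Set.Icc (0 : σ → ℝ) (fun _ => 2 * Real.pi), F y) := by
  have termwise : HasSum
      (fun k => ∫ y in Set.Icc (0 : σ → ℝ) (fun _ => 2 * Real.pi),
        c k * expMonomial (fun j => Complex.I * y j) (m k))
      (∫ y in Set.Icc (0 : σ → ℝ) (fun _ => 2 * Real.pi), F y) := by
    refine hasSum_integral_of_dominated_convergence (fun k _ => ‖c k‖) (fun k => ?_) (fun k => ?_)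
      (.of_forall fun _ => hc) (integrableOn_const isCompact_Icc.measure_ne_top) (.of_forall hF)
    · exact ((continuous_expMonomial_I_mul (m k)).const_mul (c k)).aestronglyMeasurable
    · exact .of_forall fun y => by rw [norm_mul, norm_expMonomial_I_mul, mul_one]
  refine (hasSum_subtype_iff_indicator (s := {k | m k = 0})
    (f := fun k => (2 * Real.pi : ℂ) ^ Fintype.card σ * c k)).mpr (termwise.congr_fun fun k => ?_)
  rw [integral_const_mul, integral_Icc_expMonomial_I_mul]
  simp [Set.indicator_apply, mul_comm]

end TorusIntegral

section FourierCoefficient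

variable {ι σ : Type*} [Fintype ι] [Fintype σ]

theorem hasSum_integral_exp_sum_expMonomial_mul (a : ι → ℂ) (v : ι → σ → ℤ) (w : σ → ℤ) :
    HasSum
      (fun k : {k : ι → ℕ // ∑ i, k i • v i = w} =>
        (2 * Real.pi : ℂ) ^ Fintype.card σ * ∏ i, a i ^ k.1 i / (k.1 i).factorial)
      (∫ y in Set.Icc (0 : σ → ℝ) (fun _ => 2 * Real.pi),
        Complex.exp (∑ i, a i * expMonomial (fun j => Complex.I * y j) (-v i)) *
          expMonomial (fun j => Complex.I * y j) w) := by
  have expansion (y : σ → ℝ) : HasSum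
      (fun k : ι → ℕ => (∏ i, a i ^ k i / (k i).factorial) *
        expMonomial (fun j => Complex.I * y j) (w - ∑ i, k i • v i))
      (Complex.exp (∑ i, a i * expMonomial (fun j => Complex.I * y j) (-v i)) *
        expMonomial (fun j => Complex.I * y j) w) := by
    refine ((hasSum_prod_pow_div_factorial _).mul_right _).congr_fun fun k => ?_
    have exponent : w - ∑ i, k i • v i = ∑ i, k i • -v i + w := by
      simp only [smul_neg, Finset.sum_neg_distrib]; abel
    rw [exponent, AddChar.map_add_eq_mul, expMonomial_sum_nsmul, ← mul_assoc,
      ← Finset.prod_mul_distrib]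
    simp_rw [mul_pow, div_mul_eq_mul_div]
  have exponent_eq_zero_iff (k : ι → ℕ) : ∑ i, k i • v i = w ↔ w - ∑ i, k i • v i = 0 := by
    rw [sub_eq_zero, eq_comm]
  exact (Equiv.subtypeEquivRight exponent_eq_zero_iff).hasSum_iff.mpr
    (hasSum_integral_Icc_of_hasSum_expMonomial (summable_norm_prod_pow_div_factorial a)
      (fun k => w - ∑ i, k i • v i) expansion)

theorem prod_exp_mul_expMonomial_pow_div_factorial (v : ι → σ → ℤ) (lam : ι → ℂ) (u : σ → ℂ)
    (k : ι → ℕ) :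
    ∏ i, (Complex.exp (lam i) * expMonomial u (v i)) ^ k i / ((k i).factorial : ℂ) =
      Complex.exp (∑ i, k i * lam i) / (∏ i, ((k i).factorial : ℂ)) *
        expMonomial u (∑ i, k i • v i) := by
  simp_rw [expMonomial_sum_nsmul, Complex.exp_sum, Complex.exp_nat_mul, mul_pow,
    Finset.prod_div_distrib, Finset.prod_mul_distrib, div_mul_eq_mul_div]

theorem stmt7_general (v : ι → σ → ℤ) (lam : ι → ℂ) (x : σ → ℂ) (w : σ → ℤ) :
    ∫ y in Set.Icc (0 : σ → ℝ) (fun _ => 2 * Real.pi),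
      Complex.exp (∑ i, Complex.exp (lam i) *
          ∏ j, Complex.exp (-x j - Complex.I * y j) ^ v i j) *
        Complex.exp (Complex.I * ∑ j, (y j : ℂ) * w j) =
      (2 * Real.pi) ^ Fintype.card σ *
        (∑' k : {k : ι → ℕ // ∑ i, k i • v i = w},
          Complex.exp (∑ i, k.1 i * lam i) / ∏ i, ((k.1 i).factorial : ℂ)) *
        Complex.exp (-∑ j, x j * w j) := by
  have superpotential_term (y : σ → ℝ) (i : ι) :
      Complex.exp (lam i) * ∏ j, Complex.exp (-x j - Complex.I * y j) ^ v i j =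
        Complex.exp (lam i) * expMonomial (-x) (v i) *
          expMonomial (fun j => Complex.I * y j) (-v i) := by
    rw [mul_assoc, ← expMonomial_sub_eq_mul_neg, expMonomial_eq_prod_zpow]
    rfl
  have fourier_mode (y : σ → ℝ) : Complex.exp (Complex.I * ∑ j, (y j : ℂ) * w j) =
      expMonomial (fun j => Complex.I * y j) w := by
    simp_rw [expMonomial_apply, Finset.mul_sum, mul_assoc]
  have common_factor : Complex.exp (-∑ j, x j * w j) = expMonomial (-x) w := by
    simp [expMonomial_apply]
  simp_rw [superpotential_term, fourier_mode, common_factor]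
  rw [← (hasSum_integral_exp_sum_expMonomial_mul _ v w).tsum_eq, ← tsum_mul_left, ← tsum_mul_right]
  refine tsum_congr fun k => ?_
  rw [prod_exp_mul_expMonomial_pow_div_factorial, k.2, mul_assoc]

end FourierCoefficient

/-- With `z(x,y)_j = exp(−x_j − √−1 y_j)`,
`c_w = Σ_{k ∈ ℕ^d : Σᵢ kᵢ vᵢ = w} exp(λ₁k₁ + ⋯ + λ_d k_d)/(k₁! ⋯ k_d!)` and
`W(z) = Σᵢ e^{λᵢ} z^{vᵢ}`: for all `x ∈ ℝⁿ` and `w ∈ ℤⁿ`,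
`∫_{[0,2π]ⁿ} exp(W(z(x,y))) · exp(√−1 ⟨y,w⟩) dy = (2π)ⁿ · c_w · exp(−⟨x,w⟩)`;
that is, the `w`-th fiberwise Fourier coefficient of `e^W` is the disc-counting
function `Φ(x, w) = c_w e^{−⟨x,w⟩}`, so the inverse SYZ mirror transformation of
`e^W` is `Φ`. -/
theorem stmt7 (n d : ℕ) (hn : 1 ≤ n) (hd : 1 ≤ d)
    (v : Fin d → Fin n → ℤ) (lam : Fin d → ℝ) (x : Fin n → ℝ) (w : Fin n → ℤ) :
    (∫ y in Set.Icc (0 : Fin n → ℝ) (fun _ => 2 * Real.pi),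
      Complex.exp (∑ i, ((Real.exp (lam i) : ℝ) : ℂ) *
          ∏ j, (Complex.exp (-(x j : ℂ) - Complex.I * (y j : ℂ))) ^ (v i j)) *
        Complex.exp (Complex.I * ((∑ j, y j * (w j : ℝ) : ℝ) : ℂ)))
      = (((2 * Real.pi) ^ n : ℝ) : ℂ) *
        (((∑' k : {k : Fin d → ℕ // ∑ i, k i • v i = w},
            Real.exp (∑ i, (k.1 i : ℝ) * lam i) /
              ∏ i, (Nat.factorial (k.1 i) : ℝ)) : ℝ) : ℂ) *
        ((Real.exp (-∑ j, x j * (w j : ℝ)) : ℝ) : ℂ) := by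
  simpa [Complex.ofReal_tsum] using stmt7_general v (fun i => (lam i : ℂ)) (fun j => (x j : ℂ)) w
end
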